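/- arXiv:2111.14147 — 4 statements merged into one kernel-verified Lean document; each statement's English description precedes it below -/
import Mathlib

section
/- The function g : ℝ² → ℝ defined by g(x,y) = φ·max(x,y) - φ + max(max(x,y) - φ³, min(x,y)), where φ = (1+√5)/2, is convex on ℝ². -/
/-- The golden ratio `φ = (1 + √5)/2`. -/
noncomputable def φ : ℝ := (1 + Real.sqrt 5) / 2

/-- The auxiliary function `g(x,y) = φ·max(x,y) - φ + max(max(x,y) - φ³, min(x,y))`. -/
noncomputable def g (x y : ℝ) : ℝ := φ * max x y - φ + max (max x y - φ ^ 3) (min x y)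

theorem one_le_φ : 1 ≤ φ := by
  have h : (1 : ℝ) ≤ √5 := Real.one_le_sqrt.mpr (by norm_num)
  unfold φ
  linarith

/-- `g` as a maximum of two nonnegative multiples of `max x y` plus affine functions. -/
theorem g_eq_max (x y : ℝ) :
    g x y = max ((φ + 1) * max x y - (φ + φ ^ 3)) ((φ - 1) * max x y + (x + y - φ)) := by
  rw [g, ← max_add_add_left, ← max_add_min x y]
  congr 1 <;> ring

/-- The function `g` is convex on `ℝ²`. -/
theorem g_convex : ConvexOn ℝ Set.univ (fun p : ℝ × ℝ => g p.1 p.2) := by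
  have h_fst : ConvexOn ℝ Set.univ (fun p : ℝ × ℝ => p.1) :=
    (LinearMap.fst ℝ ℝ ℝ).convexOn convex_univ
  have h_snd : ConvexOn ℝ Set.univ (fun p : ℝ × ℝ => p.2) :=
    (LinearMap.snd ℝ ℝ ℝ).convexOn convex_univ
  have h_max : ConvexOn ℝ Set.univ (fun p : ℝ × ℝ => max p.1 p.2) := h_fst.sup h_snd
  have hφ := one_le_φ
  simp only [g_eq_max]
  exact ((h_max.smul (by linarith : 0 ≤ φ + 1)).add_const (-(φ + φ ^ 3))).sup
    ((h_max.smul (by linarith : 0 ≤ φ - 1)).add ((h_fst.add h_snd).add_const (-φ)))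
end

section
/- For all real numbers x and y with y ≤ x + φ + 1, one has g(x, y + φ) ≤ g(x, y) + φ + 1, where g(x,y) = φ·max(x,y) - φ + max(max(x,y) - φ³, min(x,y)) and φ = (1+√5)/2. -/
theorem phi_sq : φ ^ 2 = φ + 1 := by
  have h5 : Real.sqrt 5 ^ 2 = 5 := Real.sq_sqrt (by norm_num)
  unfold φ
  linear_combination h5 / 4

theorem one_lt_phi : 1 < φ := by
  have h5 : 1 < Real.sqrt 5 := Real.lt_sqrt_of_sq_lt (by norm_num)
  unfold φ
  linarith

/-- If `y ≤ x + φ + 1`, then `g(x, y+φ) ≤ g(x,y) + φ + 1`. -/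
theorem g_add_phi_le (x y : ℝ) (h : y ≤ x + φ + 1) : g x (y + φ) ≤ g x y + φ + 1 := by
  have hsq := phi_sq
  have hone := one_lt_phi
  have hcube : φ ^ 3 = 2 * φ + 1 := by linear_combination (φ + 1) * hsq
  unfold g
  rw [hcube]
  rcases le_total y x with hyx | hxy
  · rw [max_eq_left hyx, min_eq_right hyx]
    have hy := le_max_right (x - (2 * φ + 1)) y
    rcases le_total (y + φ) x with hle | hle
    · rw [max_eq_left hle, min_eq_right hle]
      have hmax : max (x - (2 * φ + 1)) (y + φ) ≤ max (x - (2 * φ + 1)) y + φ :=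
        max_le (by linarith [le_max_left (x - (2 * φ + 1)) y]) (by linarith)
      linarith
    · rw [max_eq_right hle, min_eq_left hle, max_eq_right (by linarith)]
      nlinarith [mul_nonneg (sub_nonneg.2 hone.le) (sub_nonneg.2 hyx)]
  · rw [max_eq_right hxy, min_eq_left hxy, max_eq_right (by linarith : x ≤ y + φ),
      min_eq_left (by linarith : x ≤ y + φ), max_eq_right (by linarith : y + φ - _ ≤ x)]
    nlinarith [le_max_right (y - (2 * φ + 1)) x]
end

section
/- For all real numbers c and c' with c ≥ c' > 1, one has g(c + 1, c') ≤ g(c, 0) + g(c', 0) + φ + 1, where g(x,y) = φ·max(x,y) - φ + max(max(x,y) - φ³, min(x,y)) and φ = (1+√5)/2. -/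
/-- If `c ≥ c' > 1`, then `g(c+1, c') ≤ g(c,0) + g(c',0) + φ + 1`. -/
theorem g_join_blue (c c' : ℝ) (h : c' ≤ c) (h' : 1 < c') :
    g (c + 1) c' ≤ g c 0 + g c' 0 + φ + 1 := by
  have hφ : 1 ≤ φ := by
    have : (1 : ℝ) ≤ √5 := Real.one_le_sqrt.mpr (by norm_num)
    unfold φ
    linarith
  have hmul : 0 ≤ (φ - 1) * (c' - 1) := mul_nonneg (by linarith) (by linarith)
  unfold g
  rw [max_eq_left (by linarith : c' ≤ c + 1), min_eq_right (by linarith : c' ≤ c + 1),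
    max_eq_left (by linarith : 0 ≤ c), min_eq_right (by linarith : 0 ≤ c),
    max_eq_left (by linarith : 0 ≤ c'), min_eq_right (by linarith : 0 ≤ c')]
  have hc := le_max_left (c - φ ^ 3) 0
  have hc₀ := le_max_right (c - φ ^ 3) 0
  have hc' := le_max_right (c' - φ ^ 3) 0
  have hmax : max (c + 1 - φ ^ 3) c' ≤ c' + max (c - φ ^ 3) 0 :=
    max_le (by linarith) (by linarith)
  linarith
end

section
/- For all real numbers c, c' ≥ 0 with min(c, c') ≤ 1, one has g(c + c', 0) ≤ g(c, 0) + g(c', 0) + φ + 1, where g(x,y) = φ·max(x,y) - φ + max(max(x,y) - φ³, min(x,y)) and φ = (1+√5)/2. -/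
/-- If `c, c' ≥ 0` and `min(c, c') ≤ 1`, then
`g(c+c', 0) ≤ g(c,0) + g(c',0) + φ + 1`. -/
theorem g_join_red (c c' : ℝ) (hc : 0 ≤ c) (hc' : 0 ≤ c') (h : min c c' ≤ 1) :
    g (c + c') 0 ≤ g c 0 + g c' 0 + φ + 1 := by
  have key : max (c + c' - φ ^ 3) 0 ≤ max (c - φ ^ 3) 0 + max (c' - φ ^ 3) 0 + 1 := by
    have h₁ := le_max_left (c - φ ^ 3) 0
    have h₂ := le_max_right (c - φ ^ 3) 0
    have h₃ := le_max_left (c' - φ ^ 3) 0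
    have h₄ := le_max_right (c' - φ ^ 3) 0
    rcases min_le_iff.mp h with h | h <;> apply max_le <;> linarith
  simp only [g, max_eq_left hc, max_eq_left hc', max_eq_left (add_nonneg hc hc'),
    min_eq_right hc, min_eq_right hc', min_eq_right (add_nonneg hc hc')]
  linarith
end
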